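/- There exists an absolute constant C > 0 such that for every integer N ≥ 2, every pair of integers a, q with 1 ≤ a ≤ q and gcd(a,q) = 1, and every real β, we have |Ŵ(a/q + β)| ≤ C·( N^{1/2}/q^{1/2} + (q·log q)^{1/2}·(1 + |β|·N) ). -/

import Mathlib

/-- `e(x) = e^{2πix}`. -/
noncomputable def eu (x : ℝ) : ℂ := Complex.exp (2 * Real.pi * Complex.I * x)

/-- The Fourier transform `Ŵ(γ) = ∑_n W(n) e(nγ)` of the weight
`W(n) = 2m/√N` if `n = m²≤ N` (`m ≥ 1`), `W(n) = 0` otherwise. -/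
noncomputable def hatW (N : ℕ) (γ : ℝ) : ℂ :=
  ∑ m ∈ Finset.Icc 1 (Nat.sqrt N), ((2 * (m : ℝ) / Real.sqrt N : ℝ) : ℂ) * eu ((m : ℝ) ^ 2 * γ)

open Finset ComplexConjugate

lemma sum_range_natCast_zmod (q : ℕ) [NeZero q] {M : Type*} [AddCommMonoid M] (g : ZMod q → M) :
    ∑ m ∈ range q, g (m : ZMod q) = ∑ x : ZMod q, g x :=
  sum_nbij' (fun m => (m : ZMod q)) ZMod.val (by simp) (fun x _ => by simpa using ZMod.val_lt x)
    (fun m hm => ZMod.val_cast_of_lt (by simpa using hm)) (by simp) (by simp)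

lemma card_filter_two_mul_eq_le (q : ℕ) [NeZero q] (c : ZMod q) :
    #{x : ZMod q | 2 * x = c} ≤ 2 := by
  refine (card_le_card_of_injOn (t := {c.val / 2, (c.val + q) / 2}) ZMod.val ?_
    (ZMod.val_injective q).injOn).trans card_le_two
  intro x hx
  have hx : 2 * x = c := by simpa using hx
  have hlt := ZMod.val_lt x
  have hc := ZMod.val_lt c
  have h : (2 * x.val) % q = c.val := by
    rw [← hx, ← ZMod.val_natCast]
    simp
  have hdiv := Nat.div_add_mod (2 * x.val) q
  have hk : 2 * x.val / q < 2 := Nat.div_lt_of_lt_mul (by omega)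
  rw [h] at hdiv
  simp only [coe_insert, coe_singleton, Set.mem_insert_iff, Set.mem_singleton_iff]
  interval_cases hh : 2 * x.val / q <;> omega

lemma sum_two_mul_unit_mul_le (q : ℕ) [NeZero q] (u : (ZMod q)ˣ) (w : ZMod q → ℝ)
    (hw : ∀ x, 0 ≤ w x) : ∑ x, w (2 * (u * x)) ≤ 2 * ∑ x, w x := by
  have h : ∑ x, w (2 * (u * x)) = ∑ x, w (2 * x) :=
    Equiv.sum_comp (Units.mulLeft u) (fun x => w (2 * x))
  rw [h, ← sum_fiberwise_of_maps_to (s := univ) (t := univ) (g := fun x : ZMod q => 2 * x)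
    (by simp), mul_sum]
  refine sum_le_sum fun c _ => ?_
  rw [sum_congr rfl (g := fun _ => w c) (fun x hx => by rw [(mem_filter.1 hx).2]), sum_const,
    nsmul_eq_mul]
  exact mul_le_mul_of_nonneg_right (mod_cast card_filter_two_mul_eq_le q c) (hw c)

/-- A majorant of the geometric sums `∑ y < k, e(ty/q)` with `k ≤ q`. -/
noncomputable def geomMajorant (q : ℕ) (t : ZMod q) : ℝ :=
  if t = 0 then q else q / 2 * ((t.val : ℝ)⁻¹ + ((q - t.val : ℕ) : ℝ)⁻¹)

lemma geomMajorant_nonneg (q : ℕ) (t : ZMod q) : 0 ≤ geomMajorant q t := by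
  unfold geomMajorant
  split_ifs <;> positivity

lemma sum_inv_range_le (q : ℕ) : ∑ r ∈ range q, (r : ℝ)⁻¹ ≤ 1 + Real.log q := by
  rcases q with _ | q
  · simp
  rw [sum_range_succ']
  have h := harmonic_le_one_add_log q
  simp only [harmonic, Rat.cast_sum, Rat.cast_inv, Rat.cast_natCast] at h
  have h' : Real.log q ≤ Real.log (q + 1 : ℕ) := by
    rcases q.eq_zero_or_pos with rfl | hq
    · simp
    · exact Real.log_le_log (by positivity) (by simp)
  simp only [Nat.cast_zero, inv_zero, add_zero]
  linarith

lemma sum_geomMajorant_le (q : ℕ) [NeZero q] :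
    ∑ t, geomMajorant q t ≤ q * (3 + 2 * Real.log q) := by
  have hq : 1 ≤ q := NeZero.one_le
  have hlog : 0 ≤ Real.log q := Real.log_natCast_nonneg q
  rw [← sum_range_natCast_zmod]
  have hterm : ∀ r ∈ range q, geomMajorant q (r : ZMod q) ≤
      (if r = 0 then (q : ℝ) else 0) + q / 2 * ((r : ℝ)⁻¹ + ((q - r : ℕ) : ℝ)⁻¹) := by
    intro r hr
    have hr := mem_range.1 hr
    have hv := ZMod.val_cast_of_lt hr
    unfold geomMajorant
    have hz : (r : ZMod q) = 0 ↔ r = 0 := by rw [← ZMod.val_eq_zero, hv]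
    simp only [hv, hz]
    split_ifs
    · exact le_add_of_nonneg_right (by positivity)
    · simp
  have hrefl : ∑ r ∈ range q, ((q - r : ℕ) : ℝ)⁻¹ ≤ 1 + (1 + Real.log q) := by
    have h := sum_range_reflect (fun r => ((r + 1 : ℕ) : ℝ)⁻¹) q
    have h' : ∑ r ∈ range q, ((q - r : ℕ) : ℝ)⁻¹ = ∑ r ∈ range q, ((r + 1 : ℕ) : ℝ)⁻¹ := by
      rw [← h]
      refine sum_congr rfl fun r hr => ?_
      have := mem_range.1 hr
      congr 2
      omega
    have h2 := sum_range_succ' (fun r : ℕ => (r : ℝ)⁻¹) q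
    have h3 := sum_range_succ (fun r : ℕ => (r : ℝ)⁻¹) q
    have h4 := sum_inv_range_le q
    have h5 : (q : ℝ)⁻¹ ≤ 1 := inv_le_one_of_one_le₀ (mod_cast hq)
    simp only [Nat.cast_zero, inv_zero, add_zero] at h2
    rw [h']
    linarith
  have hsum := sum_le_sum hterm
  rw [sum_add_distrib, ← mul_sum, sum_add_distrib, sum_ite_eq' (range q) 0] at hsum
  rw [if_pos (mem_range.2 hq)] at hsum
  have h4 := sum_inv_range_le q
  have hq0 : (0 : ℝ) ≤ q := by positivity
  nlinarith

lemma two_le_norm_stdAddChar_sub_one_mul (q : ℕ) [NeZero q] (t : ZMod q) (ht : t ≠ 0) :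
    2 ≤ ‖ZMod.stdAddChar t - 1‖ * geomMajorant q t := by
  have hq : (0 : ℝ) < q := mod_cast NeZero.pos q
  have hlt := ZMod.val_lt t
  have hr0 : (0 : ℝ) < t.val := mod_cast Nat.pos_of_ne_zero (by simpa using ht)
  have hs : ((q - t.val : ℕ) : ℝ) = q - t.val := Nat.cast_sub hlt.le
  have hr1 : (0 : ℝ) < q - t.val := sub_pos.2 (mod_cast hlt)
  have hnorm : ‖ZMod.stdAddChar t - 1‖ = 2 * |Real.sin (Real.pi * t.val / q)| := by
    have h := ZMod.stdAddChar_coe (N := q) (t.val : ℤ)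
    rw [Int.cast_natCast, ZMod.natCast_zmod_val] at h
    have h2 := Complex.norm_exp_I_mul_ofReal_sub_one (2 * Real.pi * t.val / q)
    rw [h]
    rw [Real.norm_eq_abs, abs_mul, abs_two] at h2
    have e : 2 * Real.pi * t.val / q / 2 = Real.pi * t.val / q := by ring
    rw [← e, ← h2]
    congr 3
    push_cast
    ring
  have hpi := Real.pi_pos
  rw [hnorm, geomMajorant, if_neg ht, hs]
  set r : ℝ := (t.val : ℝ)
  rcases le_total (2 * r) q with h | h
  · have hsin := Real.mul_le_sin (x := Real.pi * r / q) (by positivity)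
      (by rw [div_le_iff₀ hq]; nlinarith)
    have e : 2 / Real.pi * (Real.pi * r / q) = 2 * r / q := by field_simp
    rw [e] at hsin
    have h1 : 2 * r / q ≤ |Real.sin (Real.pi * r / q)| := hsin.trans (le_abs_self _)
    calc (2 : ℝ) = 2 * (2 * r / q) * (q / 2 * (r⁻¹ + 0)) := by field_simp; ring
      _ ≤ _ := by gcongr; positivity
  · have hsin := Real.mul_le_sin (x := Real.pi * (q - r) / q) (by positivity)
      (by rw [div_le_iff₀ hq]; nlinarith)
    have e : 2 / Real.pi * (Real.pi * (q - r) / q) = 2 * (q - r) / q := by field_simp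
    have e' : Real.pi * (q - r) / q = Real.pi - Real.pi * r / q := by field_simp
    rw [e, e', Real.sin_pi_sub] at hsin
    have h1 : 2 * (q - r) / q ≤ |Real.sin (Real.pi * r / q)| := hsin.trans (le_abs_self _)
    calc (2 : ℝ) = 2 * (2 * (q - r) / q) * (q / 2 * (0 + (q - r)⁻¹)) := by field_simp; ring
      _ ≤ _ := by gcongr; positivity

lemma norm_geom_sum_stdAddChar_le (q : ℕ) [NeZero q] (t : ZMod q) (k : ℕ) (hk : k ≤ q) :
    ‖∑ y ∈ range k, ZMod.stdAddChar t ^ y‖ ≤ geomMajorant q t := by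
  by_cases ht : t = 0
  · simpa [ht, geomMajorant] using hk
  have h := two_le_norm_stdAddChar_sub_one_mul q t ht
  have hg := congrArg norm (geom_sum_mul (ZMod.stdAddChar t) k)
  rw [norm_mul] at hg
  have h2 : ‖ZMod.stdAddChar t ^ k - 1‖ ≤ 2 := by
    refine (norm_sub_le _ _).trans ?_
    rw [norm_pow, AddChar.norm_apply]
    norm_num
  have hpos : 0 < ‖ZMod.stdAddChar t - 1‖ := by
    by_contra hneg
    have : ‖ZMod.stdAddChar t - 1‖ = 0 := le_antisymm (not_lt.1 hneg) (norm_nonneg _)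
    rw [this] at h
    linarith
  refine le_of_mul_le_mul_right ?_ hpos
  linarith

/-- Weyl differencing: `|∑ z|²` is at most twice the sum of its nonnegative-shift correlations. -/
lemma norm_sum_range_sq_le (z : ℕ → ℂ) (n : ℕ) :
    ‖∑ x ∈ range n, z x‖ ^ 2 ≤
      2 * ‖∑ d ∈ range n, ∑ y ∈ range (n - d), z (y + d) * conj (z y)‖ := by
  have key : ∀ n, ‖∑ x ∈ range n, z x‖ ^ 2 ≤
      2 * (∑ x ∈ range n, z x * conj (∑ y ∈ range (x + 1), z y)).re := by
    intro n
    induction n with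
    | zero => simp
    | succ n ih =>
      rw [sum_range_succ (fun x => z x * _), sum_range_succ z n]
      set S := ∑ x ∈ range n, z x
      rw [← Complex.normSq_eq_norm_sq] at ih ⊢
      simp only [Complex.normSq_apply, Complex.add_re, Complex.add_im, Complex.mul_re,
        Complex.conj_re, Complex.conj_im] at ih ⊢
      nlinarith [sq_nonneg (z n).re, sq_nonneg (z n).im]
  have hflip : ∑ x ∈ range n, z x * conj (∑ y ∈ range (x + 1), z y) =
      ∑ d ∈ range n, ∑ y ∈ range (n - d), z (y + d) * conj (z y) := by
    rw [← sum_range_diag_flip n (fun d y => z (y + d) * conj (z y))]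
    refine sum_congr rfl fun x _ => ?_
    rw [map_sum, mul_sum, ← sum_range_reflect]
    refine sum_congr rfl fun d hd => ?_
    have := mem_range.1 hd
    rw [Nat.sub_add_cancel (by omega), show x + 1 - 1 - d = x - d by omega]
  rw [← hflip]
  exact (key n).trans (by gcongr; exact Complex.re_le_norm _)

/-- The quadratic phase `e(ux²/q)`. -/
noncomputable def quadPhase (q : ℕ) [NeZero q] (u x : ZMod q) : ℂ := ZMod.stdAddChar (u * x ^ 2)

lemma quadPhase_add_mul_conj (q : ℕ) [NeZero q] (u x d : ZMod q) :
    quadPhase q u (x + d) * conj (quadPhase q u x) =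
      quadPhase q u d * ZMod.stdAddChar (x * (2 * (u * d))) := by
  unfold quadPhase
  rw [← AddChar.map_neg_eq_conj, ← AddChar.map_add_eq_mul, ← AddChar.map_add_eq_mul]
  ring_nf

lemma norm_quadPhase (q : ℕ) [NeZero q] (u x : ZMod q) : ‖quadPhase q u x‖ = 1 :=
  AddChar.norm_apply _ _

lemma norm_gaussSum_sq_le (q : ℕ) [NeZero q] (u : (ZMod q)ˣ) :
    ‖∑ x, quadPhase q u x‖ ^ 2 ≤ 2 * q := by
  have h : ((‖∑ x, quadPhase q u x‖ ^ 2 : ℝ) : ℂ) =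
      ∑ d : ZMod q, quadPhase q u d * (if 2 * (u * d) = 0 then (q : ℂ) else 0) := by
    rw [Complex.ofReal_pow, ← Complex.mul_conj', map_sum, sum_mul_sum, sum_comm]
    calc _ = ∑ y, ∑ d, quadPhase q u (y + d) * conj (quadPhase q u y) :=
          sum_congr rfl fun y _ =>
            (Equiv.sum_comp (Equiv.addLeft y) (fun x => quadPhase q u x * conj (quadPhase q u y))).symm
      _ = _ := by
        rw [sum_comm]
        refine sum_congr rfl fun d _ => ?_
        simp_rw [quadPhase_add_mul_conj]
        rw [← mul_sum, AddChar.sum_mulShift _ (ZMod.isPrimitive_stdAddChar q), ZMod.card]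
        push_cast
        rfl
  have h2 : ‖∑ x, quadPhase q u x‖ ^ 2 ≤
      ∑ d : ZMod q, (if 2 * (u * d) = 0 then (q : ℝ) else 0) := by
    have h3 := congrArg norm h
    rw [Complex.norm_real, Real.norm_of_nonneg (by positivity)] at h3
    rw [h3]
    refine (norm_sum_le _ _).trans (sum_le_sum fun d _ => ?_)
    rw [norm_mul, norm_quadPhase, one_mul]
    split_ifs <;> simp
  refine h2.trans ((sum_two_mul_unit_mul_le q u (fun x => if x = 0 then (q : ℝ) else 0)
    (fun x => by split_ifs <;> simp)).trans ?_)
  simp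

lemma norm_sum_range_quadPhase_sq_le (q : ℕ) [NeZero q] (u : (ZMod q)ˣ) (n : ℕ) (hn : n ≤ q) :
    ‖∑ m ∈ range n, quadPhase q u m‖ ^ 2 ≤ 4 * (q * (3 + 2 * Real.log q)) := by
  refine (norm_sum_range_sq_le _ n).trans ?_
  have h : ‖∑ d ∈ range n, ∑ y ∈ range (n - d),
      quadPhase q u ((y + d : ℕ) : ZMod q) * conj (quadPhase q u y)‖ ≤
      ∑ d ∈ range n, geomMajorant q (2 * (u * (d : ZMod q))) := by
    refine (norm_sum_le _ _).trans (sum_le_sum fun d _ => ?_)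
    simp_rw [Nat.cast_add, quadPhase_add_mul_conj, ← nsmul_eq_mul, AddChar.map_nsmul_eq_pow]
    rw [← mul_sum, norm_mul, norm_quadPhase, one_mul]
    exact norm_geom_sum_stdAddChar_le q _ _ ((Nat.sub_le n d).trans hn)
  have h2 : ∑ d ∈ range n, geomMajorant q (2 * (u * (d : ZMod q))) ≤
      ∑ x, geomMajorant q (2 * (u * x)) := by
    rw [← sum_range_natCast_zmod q (fun x => geomMajorant q (2 * (u * x)))]
    exact sum_le_sum_of_subset_of_nonneg (range_subset_range.2 hn)
      fun _ _ _ => geomMajorant_nonneg q _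
  have h3 := sum_two_mul_unit_mul_le q u _ (geomMajorant_nonneg q)
  have h4 := sum_geomMajorant_le q
  linarith

lemma norm_sum_range_quadPhase_sub_mean_le (q : ℕ) (hq : 2 ≤ q) [NeZero q] (u : (ZMod q)ˣ)
    (n : ℕ) :
    ‖∑ m ∈ range n, (quadPhase q u m - (∑ x, quadPhase q u x) / q)‖ ≤
      8 * Real.sqrt (q * Real.log q) := by
  have hq0 : (0 : ℝ) < q := by positivity
  have hqC : (q : ℂ) ≠ 0 := NeZero.ne _
  set G := ∑ x, quadPhase q u x with hG
  induction n using Nat.strong_induction_on with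
  | _ n ih =>
    rcases lt_or_ge n q with hn | hn
    · have h1 := norm_sum_range_quadPhase_sq_le q u n hn.le
      have h2 := norm_gaussSum_sq_le q u
      rw [← hG] at h2
      have hlog : (1 / 2 : ℝ) ≤ Real.log q := by
        have := Real.log_two_gt_d9
        have := Real.log_le_log two_pos (show (2 : ℝ) ≤ q by exact_mod_cast hq)
        linarith
      have hsq : Real.sqrt (q * Real.log q) ^ 2 = q * Real.log q := Real.sq_sqrt (by positivity)
      have hmul : (q : ℝ) ≤ 2 * (q * Real.log q) := by nlinarith
      rw [sum_sub_distrib, sum_const, card_range, nsmul_eq_mul]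
      have b1 : ‖∑ m ∈ range n, quadPhase q u m‖ ≤ 6 * Real.sqrt (q * Real.log q) := by
        refine le_of_sq_le_sq ?_ (by positivity)
        nlinarith
      have b2 : ‖(n : ℂ) * (G / q)‖ ≤ 2 * Real.sqrt (q * Real.log q) := by
        have : ‖(n : ℂ) * (G / q)‖ = n / q * ‖G‖ := by
          rw [norm_mul, norm_div, Complex.norm_natCast, Complex.norm_natCast]
          ring
        have hle : (n : ℝ) / q ≤ 1 := (div_le_one hq0).2 (mod_cast hn.le)
        rw [this]
        refine (mul_le_of_le_one_left (norm_nonneg _) hle).trans ?_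
        refine le_of_sq_le_sq ?_ (by positivity)
        nlinarith
      exact (norm_sub_le _ _).trans (by linarith)
    · obtain ⟨k, rfl⟩ := Nat.exists_eq_add_of_le hn
      have hzero : ∑ m ∈ range q, (quadPhase q u m - G / q) = 0 := by
        rw [sum_sub_distrib, sum_range_natCast_zmod, ← hG, sum_const, card_range, nsmul_eq_mul,
          mul_div_cancel₀ _ hqC, sub_self]
      rw [sum_range_add, hzero, zero_add]
      simpa using ih k (by omega)

lemma eu_add (x y : ℝ) : eu (x + y) = eu x * eu y := by
  simp only [eu, ← Complex.exp_add]
  congr 1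
  push_cast
  ring

lemma norm_eu (x : ℝ) : ‖eu x‖ = 1 := by
  have := Complex.norm_exp_ofReal_mul_I (2 * Real.pi * x)
  rw [eu, ← this]
  congr 2
  push_cast
  ring

lemma norm_eu_sub_one_le (x : ℝ) : ‖eu x - 1‖ ≤ 2 * Real.pi * |x| := by
  have h := Real.norm_exp_I_mul_ofReal_sub_one_le (x := 2 * Real.pi * x)
  rw [Real.norm_eq_abs, abs_mul, abs_of_pos Real.two_pi_pos] at h
  convert h using 3
  rw [eu]
  congr 1
  push_cast
  ring

lemma eu_sq_mul_div (q : ℕ) [NeZero q] (a m : ℕ) :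
    eu ((m : ℝ) ^ 2 * (a / q)) = quadPhase q a m := by
  have h := ZMod.stdAddChar_coe (N := q) (a * m ^ 2 : ℕ)
  rw [quadPhase, eu]
  push_cast at h ⊢
  rw [h]
  congr 1
  ring

/-- The smooth part `(2m/√N) e(βm²)` of the weight. -/
noncomputable def smoothWeight (N : ℕ) (β : ℝ) (m : ℕ) : ℂ :=
  ((2 * (m : ℝ) / Real.sqrt N : ℝ) : ℂ) * eu ((m : ℝ) ^ 2 * β)

lemma natCast_sqrt_le (N : ℕ) : (Nat.sqrt N : ℝ) ≤ Real.sqrt N := Real.nat_sqrt_le_real_sqrt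

lemma norm_smoothWeight (N : ℕ) (β : ℝ) (m : ℕ) :
    ‖smoothWeight N β m‖ = 2 * m / Real.sqrt N := by
  rw [smoothWeight, norm_mul, norm_eu, mul_one, Complex.norm_real, Real.norm_of_nonneg]
  positivity

lemma norm_smoothWeight_le (N : ℕ) (hN : 0 < N) (β : ℝ) (m : ℕ) (hm : m ≤ Nat.sqrt N) :
    ‖smoothWeight N β m‖ ≤ 2 := by
  have hm' : (m : ℝ) ≤ Real.sqrt N := (Nat.cast_le.2 hm).trans (natCast_sqrt_le N)
  rw [norm_smoothWeight, div_le_iff₀ (by positivity)]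
  linarith

lemma norm_smoothWeight_succ_sub_le (N : ℕ) (hN : 0 < N) (β : ℝ) (m : ℕ) (hm : m < Nat.sqrt N) :
    ‖smoothWeight N β (m + 1) - smoothWeight N β m‖ ≤
      (2 + 8 * Real.pi * (|β| * N)) / Real.sqrt N := by
  have hs : 0 < Real.sqrt N := by positivity
  have hm' : (m : ℝ) + 1 ≤ Real.sqrt N :=
    le_trans (mod_cast Nat.succ_le_of_lt hm) (natCast_sqrt_le N)
  have hsplit : smoothWeight N β (m + 1) - smoothWeight N β m =
      ((2 / Real.sqrt N : ℝ) : ℂ) * eu (((m + 1 : ℕ) : ℝ) ^ 2 * β) +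
      smoothWeight N β m * (eu ((2 * m + 1) * β) - 1) := by
    have : (((m + 1 : ℕ) : ℝ) ^ 2 * β) = (m : ℝ) ^ 2 * β + (2 * m + 1) * β := by
      push_cast
      ring
    simp only [smoothWeight]
    rw [this, eu_add]
    push_cast
    ring
  have hpi := Real.pi_pos
  have hb : ‖smoothWeight N β m‖ * ‖eu ((2 * m + 1) * β) - 1‖ ≤
      8 * Real.pi * (|β| * N) / Real.sqrt N := by
    have h1 := norm_eu_sub_one_le ((2 * m + 1) * β)
    rw [abs_mul, abs_of_nonneg (by positivity : (0 : ℝ) ≤ 2 * m + 1)] at h1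
    have h2 := norm_smoothWeight_le N hN β m hm.le
    have h3 : ‖eu ((2 * m + 1) * β) - 1‖ ≤ 2 * Real.pi * (2 * Real.sqrt N * |β|) :=
      h1.trans (by gcongr; linarith)
    calc _ ≤ 2 * (2 * Real.pi * (2 * Real.sqrt N * |β|)) := by gcongr
      _ = 8 * Real.pi * (|β| * (Real.sqrt N * Real.sqrt N)) / Real.sqrt N := by
        field_simp
        ring
      _ = _ := by rw [Real.mul_self_sqrt (by positivity)]
  rw [hsplit, add_div]
  refine (norm_add_le _ _).trans (add_le_add ?_ ?_)
  · rw [norm_mul, norm_eu, mul_one, Complex.norm_real, Real.norm_of_nonneg (by positivity)]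
  · rw [norm_mul]
    exact hb

lemma hatW_add (N : ℕ) (α β : ℝ) :
    hatW N (α + β) =
      ∑ m ∈ range (Nat.sqrt N + 1), smoothWeight N β m * eu ((m : ℝ) ^ 2 * α) := by
  rw [hatW, range_eq_Ico, sum_eq_sum_Ico_succ_bot (Nat.succ_pos _)]
  have : smoothWeight N β 0 = 0 := by simp [smoothWeight]
  rw [this, zero_mul, zero_add]
  refine sum_congr rfl fun m _ => ?_
  rw [smoothWeight, mul_add, eu_add]
  ring

lemma sum_norm_smoothWeight_le (N : ℕ) (hN : 0 < N) (β : ℝ) :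
    ∑ m ∈ range (Nat.sqrt N + 1), ‖smoothWeight N β m‖ ≤ 2 * Real.sqrt N := by
  rw [sum_range_succ', norm_smoothWeight N β 0]
  refine (add_le_add_left (sum_le_card_nsmul _ _ 2 fun m hm =>
    norm_smoothWeight_le N hN β (m + 1) (Nat.succ_le_of_lt (mem_range.1 hm))) _).trans ?_
  have := natCast_sqrt_le N
  simp only [card_range, nsmul_eq_mul, Nat.cast_zero, mul_zero, zero_div, add_zero]
  linarith

lemma norm_sum_smoothWeight_mul_le (N : ℕ) (hN : 0 < N) (β B : ℝ) (f : ℕ → ℂ)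
    (hf : ∀ n, ‖∑ m ∈ range n, f m‖ ≤ B) :
    ‖∑ m ∈ range (Nat.sqrt N + 1), smoothWeight N β m * f m‖ ≤
      B * (4 + 8 * Real.pi * (|β| * N)) := by
  have hB : 0 ≤ B := (norm_nonneg _).trans (hf 0)
  have hs : 0 < Real.sqrt N := by positivity
  have h := sum_range_by_parts (smoothWeight N β) f (Nat.sqrt N + 1)
  simp only [smul_eq_mul, Nat.add_sub_cancel] at h
  rw [h]
  have h1 : ‖smoothWeight N β (Nat.sqrt N) * ∑ i ∈ range (Nat.sqrt N + 1), f i‖ ≤ 2 * B := by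
    rw [norm_mul]
    exact mul_le_mul (norm_smoothWeight_le N hN β _ le_rfl) (hf _) (norm_nonneg _) zero_le_two
  have h2 : ‖∑ i ∈ range (Nat.sqrt N), (smoothWeight N β (i + 1) - smoothWeight N β i) *
      ∑ j ∈ range (i + 1), f j‖ ≤ (2 + 8 * Real.pi * (|β| * N)) * B := by
    set V := (2 + 8 * Real.pi * (|β| * N)) with hV
    have hV0 : 0 ≤ V := by have := Real.pi_pos; positivity
    refine (norm_sum_le _ _).trans ((sum_le_card_nsmul _ _ (V / Real.sqrt N * B)
      fun m hm => ?_).trans ?_)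
    · rw [norm_mul]
      exact mul_le_mul (norm_smoothWeight_succ_sub_le N hN β m (mem_range.1 hm)) (hf _)
        (norm_nonneg _) (by positivity)
    · rw [card_range, nsmul_eq_mul]
      calc (Nat.sqrt N : ℝ) * (V / Real.sqrt N * B) ≤ Real.sqrt N * (V / Real.sqrt N * B) := by
            gcongr
            exact natCast_sqrt_le N
        _ = V * B := by field_simp
  refine (norm_sub_le _ _).trans ?_
  linarith

theorem statement_7 :
    ∃ C > (0 : ℝ), ∀ N : ℕ, 2 ≤ N → ∀ a q : ℕ, 1 ≤ a → a ≤ q → Nat.gcd a q = 1 →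
      ∀ β : ℝ, ‖hatW N ((a : ℝ) / q + β)‖ ≤
        C * (Real.sqrt N / Real.sqrt q + Real.sqrt ((q : ℝ) * Real.log q) * (1 + |β| * N)) := by
  refine ⟨64 * Real.pi, by have := Real.pi_pos; positivity, ?_⟩
  intro N hN a q ha haq hgcd β
  have hN0 : 0 < N := by omega
  have hpi := Real.pi_gt_three
  have hW := sum_norm_smoothWeight_le N hN0 β
  rw [hatW_add]
  rcases (show q = 1 ∨ 2 ≤ q by omega) with rfl | hq
  · have hbound : ‖∑ m ∈ range (Nat.sqrt N + 1),
        smoothWeight N β m * eu ((m : ℝ) ^ 2 * (a / (1 : ℕ)))‖ ≤ 2 * Real.sqrt N := by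
      refine (norm_sum_le _ _).trans (le_trans (le_of_eq ?_) hW)
      exact sum_congr rfl fun m _ => by rw [norm_mul, norm_eu, mul_one]
    have hs := Real.sqrt_nonneg N
    refine hbound.trans ?_
    simp only [Nat.cast_one, Real.sqrt_one, div_one, Real.log_one, mul_zero, Real.sqrt_zero,
      zero_mul, add_zero]
    nlinarith
  have : NeZero q := ⟨by omega⟩
  have hq0 : (0 : ℝ) < q := by positivity
  set u : (ZMod q)ˣ := ZMod.unitOfCoprime a hgcd
  have hu : (u : ZMod q) = a := ZMod.coe_unitOfCoprime a hgcd
  set G := ∑ x, quadPhase q u x with hG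
  have hsplit : ∑ m ∈ range (Nat.sqrt N + 1), smoothWeight N β m * eu ((m : ℝ) ^ 2 * (a / q)) =
      (∑ m ∈ range (Nat.sqrt N + 1), smoothWeight N β m) * (G / q) +
      ∑ m ∈ range (Nat.sqrt N + 1), smoothWeight N β m * (quadPhase q u m - G / q) := by
    rw [sum_mul, ← sum_add_distrib]
    refine sum_congr rfl fun m _ => ?_
    rw [eu_sq_mul_div, hu]
    ring
  have herr := norm_sum_smoothWeight_mul_le N hN0 β _ _
    (norm_sum_range_quadPhase_sub_mean_le q hq u)
  rw [← hG] at herr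
  have hGle : ‖G‖ ≤ 2 * Real.sqrt q := by
    have h := norm_gaussSum_sq_le q u
    rw [← hG] at h
    refine le_of_sq_le_sq ?_ (by positivity)
    rw [mul_pow, Real.sq_sqrt hq0.le]
    linarith
  have hmain : ‖(∑ m ∈ range (Nat.sqrt N + 1), smoothWeight N β m) * (G / q)‖ ≤
      4 * (Real.sqrt N / Real.sqrt q) := by
    rw [norm_mul, norm_div, Complex.norm_natCast]
    calc _ ≤ 2 * Real.sqrt N * (2 * Real.sqrt q / q) := by
          gcongr
          exact (norm_sum_le _ _).trans hW
      _ = 2 * Real.sqrt N * (2 * Real.sqrt q / (Real.sqrt q * Real.sqrt q)) := by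
          rw [Real.mul_self_sqrt hq0.le]
      _ = _ := by
          field_simp
          ring
  rw [hsplit]
  refine (norm_add_le _ _).trans ((add_le_add hmain herr).trans ?_)
  have hX : 0 ≤ Real.sqrt N / Real.sqrt q := by positivity
  have hL : 0 ≤ Real.sqrt (q * Real.log q) := Real.sqrt_nonneg _
  have hLβ : 0 ≤ Real.sqrt (q * Real.log q) * (|β| * N) := by positivity
  nlinarith
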